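/- arXiv:1607.02409 — 6 statements merged into one kernel-verified Lean document; each statement's English description precedes it below -/
import Mathlib

section
/- Let J(x) = x·tanh x for x ∈ ℝ. Then the function x ↦ √(J(x)) is subadditive: for all real x and y, √(J(x+y)) ≤ √(J(x)) + √(J(y)). -/
noncomputable def J (x : ℝ) : ℝ := x * Real.tanh x

/-!
On `(0, ∞)` we have `√(J x) / x = √(tanh x / x)`. Since `tanh` is concave on `[0, ∞)` and vanishes
at `0`, `tanh x / x` decreases, hence so does `√(J x) / x`, and a function `f` on `(0, ∞)` for which
`f x / x` decreases is subadditive. Negative arguments are reduced to this case because `√J` is even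
and increasing on `[0, ∞)`.
-/

open Set

theorem map_add_le_of_antitoneOn_div_self {𝕜 : Type*} [Semifield 𝕜] [LinearOrder 𝕜]
    [IsStrictOrderedRing 𝕜] {f : 𝕜 → 𝕜} (hf : AntitoneOn (fun x ↦ f x / x) (Ioi 0)) {x y : 𝕜}
    (hx : 0 < x) (hy : 0 < y) : f (x + y) ≤ f x + f y := by
  have hxy : 0 < x + y := add_pos hx hy
  have hfx : f (x + y) / (x + y) ≤ f x / x := hf hx hxy (le_add_of_nonneg_right hy.le)
  have hfy : f (x + y) / (x + y) ≤ f y / y := hf hy hxy (le_add_of_nonneg_left hx.le)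
  calc
    f (x + y) = x * (f (x + y) / (x + y)) + y * (f (x + y) / (x + y)) := by
      rw [← add_mul, mul_div_cancel₀ _ hxy.ne']
    _ ≤ x * (f x / x) + y * (f y / y) := by gcongr
    _ = f x + f y := by rw [mul_div_cancel₀ _ hx.ne', mul_div_cancel₀ _ hy.ne']

theorem antitoneOn_div_self_of_concaveOn {𝕜 : Type*} [Field 𝕜] [LinearOrder 𝕜]
    [IsStrictOrderedRing 𝕜] {f : 𝕜 → 𝕜} (hf : ConcaveOn 𝕜 (Ici 0) f) (h0 : 0 ≤ f 0) :
    AntitoneOn (fun x ↦ f x / x) (Ioi 0) := by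
  have hslope : AntitoneOn (slope f 0) (Ioi 0) :=
    (hf.antitoneOn_slope_gt self_mem_Ici).mono fun _ hx ↦ ⟨Ioi_subset_Ici_self hx, hx⟩
  have hdiv : AntitoneOn (fun x ↦ f 0 / x) (Ioi 0) := fun _ hx _ _ hxy ↦
    div_le_div_of_nonneg_left h0 hx hxy
  refine (hslope.add hdiv).congr fun x _ ↦ ?_
  simp only [slope_def_field, sub_zero, ← add_div, sub_add_cancel]

theorem map_abs_of_even {α β : Type*} [AddGroup α] [LinearOrder α] {f : α → β}
    (hf : Function.Even f) (x : α) : f |x| = f x := by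
  rcases abs_choice x with h | h <;> simp only [h, hf x]

theorem map_add_le_of_even {α β : Type*} [AddCommGroup α] [LinearOrder α] [IsOrderedAddMonoid α]
    [Preorder β] [Add β] {f : α → β} (heven : Function.Even f) (hmono : MonotoneOn f (Ici 0))
    (hadd : ∀ ⦃x⦄, 0 ≤ x → ∀ ⦃y⦄, 0 ≤ y → f (x + y) ≤ f x + f y) (x y : α) :
    f (x + y) ≤ f x + f y :=
  calc
    f (x + y) = f |x + y| := (map_abs_of_even heven _).symm
    _ ≤ f (|x| + |y|) :=
      hmono (abs_nonneg _) (add_nonneg (abs_nonneg x) (abs_nonneg y)) (abs_add_le x y)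
    _ ≤ f |x| + f |y| := hadd (abs_nonneg x) (abs_nonneg y)
    _ = f x + f y := by rw [map_abs_of_even heven, map_abs_of_even heven]

theorem sqrt_mul_div_self {x : ℝ} (hx : 0 < x) (y : ℝ) : √(x * y) / x = √(y / x) :=
  calc
    √(x * y) / x = √(x * y / x ^ 2) := by rw [Real.sqrt_div' _ (sq_nonneg x), Real.sqrt_sq hx.le]
    _ = √(y / x) := by rw [sq, mul_div_mul_left _ _ hx.ne']

theorem antitoneOn_sqrt_mul_div_self {f : ℝ → ℝ} (hf : AntitoneOn (fun x ↦ f x / x) (Ioi 0)) :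
    AntitoneOn (fun x ↦ √(x * f x) / x) (Ioi 0) :=
  (Real.sqrt_monotone.comp_antitoneOn hf).congr fun _ hx ↦ (sqrt_mul_div_self hx _).symm

theorem hasDerivAt_tanh (x : ℝ) : HasDerivAt Real.tanh (1 / Real.cosh x ^ 2) x := by
  have h := (Real.hasDerivAt_sinh x).div (Real.hasDerivAt_cosh x) (Real.cosh_pos x).ne'
  rw [← sq, ← sq, Real.cosh_sq_sub_sinh_sq] at h
  exact h.congr_of_eventuallyEq (.of_forall Real.tanh_eq_sinh_div_cosh)

theorem differentiable_tanh : Differentiable ℝ Real.tanh :=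
  fun x ↦ (hasDerivAt_tanh x).differentiableAt

theorem deriv_tanh : deriv Real.tanh = fun x ↦ 1 / Real.cosh x ^ 2 :=
  funext fun x ↦ (hasDerivAt_tanh x).deriv

theorem monotone_tanh : Monotone Real.tanh :=
  monotone_of_deriv_nonneg differentiable_tanh fun x ↦ by
    rw [deriv_tanh]
    positivity

theorem tanh_nonneg {x : ℝ} (hx : 0 ≤ x) : 0 ≤ Real.tanh x :=
  Real.tanh_zero.symm.trans_le (monotone_tanh hx)

theorem concaveOn_tanh : ConcaveOn ℝ (Ici 0) Real.tanh := by
  refine AntitoneOn.concaveOn_of_deriv (convex_Ici 0) differentiable_tanh.continuous.continuousOn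
    differentiable_tanh.differentiableOn ?_
  rw [deriv_tanh, interior_Ici]
  intro x hx y hy hxy
  have hcosh : Real.cosh x ≤ Real.cosh y := by
    rwa [Real.cosh_le_cosh, abs_of_pos hx, abs_of_pos hy]
  exact one_div_le_one_div_of_le (pow_pos (Real.cosh_pos x) 2)
    (pow_le_pow_left₀ (Real.cosh_pos x).le hcosh 2)

theorem antitoneOn_tanh_div_self : AntitoneOn (fun x ↦ Real.tanh x / x) (Ioi 0) :=
  antitoneOn_div_self_of_concaveOn concaveOn_tanh Real.tanh_zero.ge

theorem even_J : Function.Even J := fun x ↦ by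
  simp only [J, Real.tanh_neg, neg_mul_neg]

theorem monotoneOn_J : MonotoneOn J (Ici 0) := fun _ hx _ hy hxy ↦
  mul_le_mul hxy (monotone_tanh hxy) (tanh_nonneg hx) hy

theorem sqrt_J_add_le_of_nonneg {x y : ℝ} (hx : 0 ≤ x) (hy : 0 ≤ y) :
    √(J (x + y)) ≤ √(J x) + √(J y) := by
  rcases hx.eq_or_lt with rfl | hx
  · simp [J]
  rcases hy.eq_or_lt with rfl | hy
  · simp [J]
  exact map_add_le_of_antitoneOn_div_self (f := fun x ↦ √(J x))
    (antitoneOn_sqrt_mul_div_self antitoneOn_tanh_div_self) hx hy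

/-- Subadditivity of the finite-depth dispersion relation `√(x tanh x)`. -/
theorem sqrt_J_subadditive (x y : ℝ) :
    Real.sqrt (J (x + y)) ≤ Real.sqrt (J x) + Real.sqrt (J y) := by
  have heven : Function.Even fun x ↦ √(J x) := even_J.left_comp Real.sqrt
  have hmono : MonotoneOn (fun x ↦ √(J x)) (Ici 0) :=
    Real.sqrt_monotone.comp_monotoneOn monotoneOn_J
  exact map_add_le_of_even heven hmono (fun _ hx _ hy ↦ sqrt_J_add_le_of_nonneg hx hy) x y
end

section
/- Let J(x) = x·tanh x and Ω(ξ,η,ζ) = J(ξ)² + J(η)² + J(ζ)² − 2J(ξ)J(η) − 2J(η)J(ζ) − 2J(ζ)J(ξ). Then for all real ξ, η, ζ with ξ + η + ζ = 0 one has Ω(ξ,η,ζ) ≤ 0. -/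
noncomputable def Ω (ξ η ζ : ℝ) : ℝ :=
  J ξ ^ 2 + J η ^ 2 + J ζ ^ 2 - 2 * J ξ * J η - 2 * J η * J ζ - 2 * J ζ * J ξ

/-! `Ω ξ η ζ = (J ζ - J ξ - J η) ^ 2 - 4 * J ξ * J η`, and `Ω` is symmetric, so one may assume that
`tanh ξ` and `tanh η` have the same sign. As `J` is even, `J ζ = J (ξ + η)`. The addition formula
for `tanh` expresses the defect `J (ξ + η) - J ξ - J η` through `ξ / cosh² ξ` and `η / cosh² η`;
since `|x| / cosh² x ≤ |tanh x|`, it is at most `2 * |tanh ξ * tanh η|` in absolute value. Finally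
`tanh² x ≤ J x`, because `|tanh x| ≤ |x|`. -/

open Real

theorem one_sub_tanh_sq (x : ℝ) : 1 - tanh x ^ 2 = 1 / cosh x ^ 2 := by
  have hcosh : cosh x ≠ 0 := (cosh_pos x).ne'
  rw [tanh_eq_sinh_div_cosh]
  field_simp
  exact cosh_sq_sub_sinh_sq x

theorem one_add_tanh_mul_tanh_pos (x y : ℝ) : 0 < 1 + tanh x * tanh y := by
  have hprod : |tanh x * tanh y| < 1 := by
    rw [abs_mul]
    exact mul_lt_one_of_nonneg_of_lt_one_left (abs_nonneg _) (abs_tanh_lt_one x)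
      (abs_tanh_lt_one y).le
  linarith [(abs_lt.mp hprod).1]

theorem tanh_add (x y : ℝ) :
    tanh (x + y) = (tanh x + tanh y) / (1 + tanh x * tanh y) := by
  have hx : cosh x ≠ 0 := (cosh_pos x).ne'
  have hy : cosh y ≠ 0 := (cosh_pos y).ne'
  simp only [tanh_eq_sinh_div_cosh, sinh_add, cosh_add]
  field_simp

theorem hasDerivAt_tanh_s2 (x : ℝ) : HasDerivAt tanh (1 - tanh x ^ 2) x := by
  have hcosh : cosh x ≠ 0 := (cosh_pos x).ne'
  have hquot := (hasDerivAt_sinh x).div (hasDerivAt_cosh x) hcosh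
  rw [show tanh = sinh / cosh from funext tanh_eq_sinh_div_cosh]
  refine hquot.congr_deriv ?_
  rw [Pi.div_apply]
  field_simp

theorem abs_tanh_le_abs (x : ℝ) : |tanh x| ≤ |x| := by
  have hderiv (u : ℝ) : ‖1 - tanh u ^ 2‖ ≤ 1 := by
    rw [norm_eq_abs, abs_of_pos (sub_pos.mpr (tanh_sq_lt_one u))]
    exact sub_le_self 1 (sq_nonneg _)
  simpa using convex_univ.norm_image_sub_le_of_norm_hasDerivWithin_le
    (fun u _ => (hasDerivAt_tanh_s2 u).hasDerivWithinAt) (fun u _ => hderiv u)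
    (Set.mem_univ 0) (Set.mem_univ x)

theorem abs_tanh (x : ℝ) : |tanh x| = tanh |x| := by
  rw [tanh_eq_sinh_div_cosh, tanh_eq_sinh_div_cosh, abs_div, abs_sinh, abs_of_pos (cosh_pos x),
    cosh_abs]

theorem abs_le_abs_sinh (x : ℝ) : |x| ≤ |sinh x| := by
  rw [abs_sinh]
  exact self_le_sinh_iff.mpr (abs_nonneg x)

theorem abs_mul_one_sub_tanh_sq_le (x : ℝ) : |x * (1 - tanh x ^ 2)| ≤ |tanh x| := by
  have hcosh : 0 < cosh x := cosh_pos x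
  calc |x * (1 - tanh x ^ 2)|
      = |x| / cosh x ^ 2 := by
        rw [one_sub_tanh_sq, mul_one_div, abs_div, abs_of_pos (pow_pos hcosh 2)]
    _ ≤ |sinh x| / cosh x :=
        div_le_div₀ (abs_nonneg _) (abs_le_abs_sinh x) hcosh
          (le_self_pow₀ (one_le_cosh x) two_ne_zero)
    _ = |tanh x| := by rw [tanh_eq_sinh_div_cosh, abs_div, abs_of_pos hcosh]

theorem J_neg (x : ℝ) : J (-x) = J x := by
  rw [J, J, tanh_neg, neg_mul_neg]

theorem J_abs (x : ℝ) : J |x| = J x := by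
  rcases abs_choice x with habs | habs
  · rw [habs]
  · rw [habs, J_neg]

theorem J_eq_abs_mul_abs_tanh (x : ℝ) : J x = |x| * |tanh x| := by
  rw [abs_tanh]
  exact (J_abs x).symm

theorem J_nonneg (x : ℝ) : 0 ≤ J x := by
  rw [J_eq_abs_mul_abs_tanh]
  positivity

theorem tanh_sq_le_J (x : ℝ) : tanh x ^ 2 ≤ J x := by
  calc tanh x ^ 2 = |tanh x| * |tanh x| := by rw [← sq, sq_abs]
    _ ≤ |x| * |tanh x| := mul_le_mul_of_nonneg_right (abs_tanh_le_abs x) (abs_nonneg _)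
    _ = J x := (J_eq_abs_mul_abs_tanh x).symm

theorem J_add_sub_J_sub_J (x y : ℝ) :
    J (x + y) - J x - J y =
      (x * (1 - tanh x ^ 2) * tanh y + y * (1 - tanh y ^ 2) * tanh x) /
        (1 + tanh x * tanh y) := by
  have hdenom : 1 + tanh x * tanh y ≠ 0 := (one_add_tanh_mul_tanh_pos x y).ne'
  simp only [J, tanh_add]
  field_simp
  ring

theorem abs_J_add_sub_J_sub_J_le {x y : ℝ} (hxy : 0 ≤ tanh x * tanh y) :
    |J (x + y) - J x - J y| ≤ 2 * |tanh x * tanh y| := by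
  have hdenom : 1 ≤ 1 + tanh x * tanh y := le_add_of_nonneg_right hxy
  rw [J_add_sub_J_sub_J, abs_div, abs_of_pos (zero_lt_one.trans_le hdenom)]
  calc |x * (1 - tanh x ^ 2) * tanh y + y * (1 - tanh y ^ 2) * tanh x| / (1 + tanh x * tanh y)
      ≤ |x * (1 - tanh x ^ 2) * tanh y + y * (1 - tanh y ^ 2) * tanh x| :=
        div_le_self (abs_nonneg _) hdenom
    _ ≤ |x * (1 - tanh x ^ 2)| * |tanh y| + |y * (1 - tanh y ^ 2)| * |tanh x| := by
        rw [← abs_mul, ← abs_mul]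
        exact abs_add_le _ _
    _ ≤ |tanh x| * |tanh y| + |tanh y| * |tanh x| :=
        add_le_add
          (mul_le_mul_of_nonneg_right (abs_mul_one_sub_tanh_sq_le x) (abs_nonneg _))
          (mul_le_mul_of_nonneg_right (abs_mul_one_sub_tanh_sq_le y) (abs_nonneg _))
    _ = 2 * |tanh x * tanh y| := by rw [abs_mul]; ring

theorem sq_J_add_sub_J_sub_J_le {x y : ℝ} (hxy : 0 ≤ tanh x * tanh y) :
    (J (x + y) - J x - J y) ^ 2 ≤ 4 * J x * J y := by
  calc (J (x + y) - J x - J y) ^ 2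
      ≤ (2 * |tanh x * tanh y|) ^ 2 := by
        rw [← sq_abs]
        exact pow_le_pow_left₀ (abs_nonneg _) (abs_J_add_sub_J_sub_J_le hxy) 2
    _ = 4 * (tanh x ^ 2 * tanh y ^ 2) := by rw [mul_pow, sq_abs]; ring
    _ ≤ 4 * (J x * J y) := by
        gcongr
        exacts [J_nonneg x, tanh_sq_le_J x, tanh_sq_le_J y]
    _ = 4 * J x * J y := by ring

theorem Ω_rotate (ξ η ζ : ℝ) : Ω η ζ ξ = Ω ξ η ζ := by
  unfold Ω
  ring

theorem Ω_nonpos_of_tanh_mul_tanh_nonneg {ξ η ζ : ℝ} (hsum : ξ + η + ζ = 0)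
    (hξη : 0 ≤ tanh ξ * tanh η) : Ω ξ η ζ ≤ 0 := by
  have hζ : J ζ = J (ξ + η) := by rw [eq_neg_of_add_eq_zero_right hsum, J_neg]
  calc Ω ξ η ζ = (J (ξ + η) - J ξ - J η) ^ 2 - 4 * J ξ * J η := by rw [Ω, hζ]; ring
    _ ≤ 0 := sub_nonpos.mpr (sq_J_add_sub_J_sub_J_le hξη)

/-- The symmetrized resonance function is nonpositive on the resonant plane. -/
theorem resonance_nonpos (ξ η ζ : ℝ) (h : ξ + η + ζ = 0) : Ω ξ η ζ ≤ 0 := by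
  rcases mul_nonneg_of_three (tanh ξ) (tanh η) (tanh ζ) with hξη | hηζ | hζξ
  · exact Ω_nonpos_of_tanh_mul_tanh_nonneg h hξη
  · rw [← Ω_rotate]
    exact Ω_nonpos_of_tanh_mul_tanh_nonneg (by linarith) hηζ
  · rw [Ω_rotate ζ ξ η]
    exact Ω_nonpos_of_tanh_mul_tanh_nonneg (by linarith) hζξ
end

section
/- Let J(x) = x·tanh x and Ω(ξ,η,ζ) = J(ξ)² + J(η)² + J(ζ)² − 2J(ξ)J(η) − 2J(η)J(ζ) − 2J(ζ)J(ξ). There exists a constant C > 0 such that for all real ξ ≤ −1 and all real η with |η| ≤ −ξ/2, one has |Ω(ξ, η, −ξ−η) − 4J(η)·ξ − (η + J(η))²| ≤ C·(1 + ξ²)·e^{ξ}. -/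
theorem one_sub_tanh_le_two_mul_exp (x : ℝ) : 1 - Real.tanh x ≤ 2 * Real.exp (-2 * x) := by
  have one_sub_tanh_eq : 1 - Real.tanh x = Real.exp (-x) / Real.cosh x := by
    rw [Real.tanh_eq_sinh_div_cosh, one_sub_div (Real.cosh_pos x).ne', Real.cosh_sub_sinh]
  have exp_div_two_le_cosh : Real.exp x / 2 ≤ Real.cosh x := by
    rw [Real.cosh_eq]
    linarith [Real.exp_pos (-x)]
  calc 1 - Real.tanh x = Real.exp (-x) / Real.cosh x := one_sub_tanh_eq
    _ ≤ Real.exp (-x) / (Real.exp x / 2) := by gcongr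
    _ = 2 * (Real.exp (-x) / Real.exp x) := by ring
    _ = 2 * Real.exp (-2 * x) := by rw [← Real.exp_sub]; ring_nf

namespace J

theorem apply_abs (x : ℝ) : J |x| = J x := by
  rcases abs_choice x with h | h <;> simp [J, h, Real.tanh_neg]

theorem abs_apply_le (x : ℝ) : |J x| ≤ |x| := by
  rw [J, abs_mul]
  exact mul_le_of_le_one_right (abs_nonneg x) (Real.abs_tanh_lt_one x).le

/-- The gap between `J x`, the squared frequency at depth one, and its infinite-depth counterpart
`|x|`. -/
noncomputable def defect (x : ℝ) : ℝ := |x| - J x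

theorem defect_nonneg (x : ℝ) : 0 ≤ defect x :=
  sub_nonneg.2 ((le_abs_self _).trans (abs_apply_le x))

theorem defect_eq_abs_mul_one_sub_tanh (x : ℝ) : defect x = |x| * (1 - Real.tanh |x|) := by
  rw [defect, ← apply_abs, J]
  ring

theorem defect_le_of_le_abs {x m : ℝ} (hm : m ≤ |x|) :
    defect x ≤ 2 * |x| * Real.exp (-2 * m) :=
  calc defect x = |x| * (1 - Real.tanh |x|) := defect_eq_abs_mul_one_sub_tanh x
    _ ≤ |x| * (2 * Real.exp (-2 * |x|)) := by
      gcongr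
      exact one_sub_tanh_le_two_mul_exp _
    _ = 2 * |x| * Real.exp (-2 * |x|) := by ring
    _ ≤ 2 * |x| * Real.exp (-2 * m) := by
      gcongr 2 * |x| * Real.exp ?_
      linarith

end J

namespace Ω

/-- The error made by replacing `Ω ξ η (-ξ - η)` with its high-frequency expansion as `ξ → -∞`. -/
noncomputable def remainder (ξ η : ℝ) : ℝ :=
  Ω ξ η (-ξ - η) - 4 * J η * ξ - (η + J η) ^ 2

variable {ξ η : ℝ}

theorem remainder_eq (hξ : ξ ≤ 0) (hζ : 0 ≤ -ξ - η) :
    remainder ξ η = (J.defect (-ξ - η) - J.defect ξ) * (J ξ - J (-ξ - η) + η) +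
      (J.defect ξ + J.defect (-ξ - η)) * (2 * J η) := by
  rw [remainder, Ω, J.defect, J.defect, abs_of_nonpos hξ, abs_of_nonneg hζ]
  ring

theorem abs_remainder_le (hξ : ξ ≤ 0) (hζ : 0 ≤ -ξ - η) :
    |remainder ξ η| ≤
      (J.defect ξ + J.defect (-ξ - η)) * (|ξ| + |-ξ - η| + 3 * |η|) := by
  have defect_add_nonneg : 0 ≤ J.defect ξ + J.defect (-ξ - η) :=
    add_nonneg (J.defect_nonneg _) (J.defect_nonneg _)
  have abs_defect_sub_le :
      |J.defect (-ξ - η) - J.defect ξ| ≤ J.defect ξ + J.defect (-ξ - η) :=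
    abs_le.2 ⟨by linarith [J.defect_nonneg (-ξ - η)], by linarith [J.defect_nonneg ξ]⟩
  have abs_coeff_le : |J ξ - J (-ξ - η) + η| ≤ |ξ| + |-ξ - η| + |η| :=
    (abs_add_le _ _).trans <| by
      gcongr
      exact (abs_sub _ _).trans (add_le_add (J.abs_apply_le _) (J.abs_apply_le _))
  have abs_two_mul_J_le : |2 * J η| ≤ 2 * |η| := by
    rw [abs_mul, abs_two]
    exact mul_le_mul_of_nonneg_left (J.abs_apply_le η) zero_le_two
  rw [remainder_eq hξ hζ]
  refine (abs_add_le _ _).trans ?_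
  rw [abs_mul, abs_mul, abs_of_nonneg defect_add_nonneg]
  calc |J.defect (-ξ - η) - J.defect ξ| * |J ξ - J (-ξ - η) + η| +
        (J.defect ξ + J.defect (-ξ - η)) * |2 * J η|
      ≤ (J.defect ξ + J.defect (-ξ - η)) * (|ξ| + |-ξ - η| + |η|) +
        (J.defect ξ + J.defect (-ξ - η)) * (2 * |η|) := by gcongr
    _ = (J.defect ξ + J.defect (-ξ - η)) * (|ξ| + |-ξ - η| + 3 * |η|) := by ring

end Ω

theorem resonance_asymptotics_general {c ξ η : ℝ} (hc : c ≤ 1) (hξ : ξ ≤ 0)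
    (hη : |η| ≤ c * |ξ|) :
    |Ω ξ η (-ξ - η) - 4 * J η * ξ - (η + J η) ^ 2| ≤
      36 * ξ ^ 2 * Real.exp (2 * (1 - c) * ξ) := by
  have abs_ξ : |ξ| = -ξ := abs_of_nonpos hξ
  have abs_η_le : |η| ≤ |ξ| := hη.trans (mul_le_of_le_one_left (abs_nonneg ξ) hc)
  have ζ_nonneg : 0 ≤ -ξ - η := by linarith [le_abs_self η]
  have abs_ζ_le : |-ξ - η| ≤ 2 * |ξ| := by
    rw [abs_of_nonneg ζ_nonneg]
    linarith [neg_abs_le η]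
  have le_abs_ξ : (1 - c) * |ξ| ≤ |ξ| := by linarith [abs_nonneg η]
  have le_abs_ζ : (1 - c) * |ξ| ≤ |-ξ - η| := by
    rw [abs_of_nonneg ζ_nonneg]
    linarith [le_abs_self η]
  calc |Ω ξ η (-ξ - η) - 4 * J η * ξ - (η + J η) ^ 2|
      ≤ (J.defect ξ + J.defect (-ξ - η)) * (|ξ| + |-ξ - η| + 3 * |η|) :=
        Ω.abs_remainder_le hξ ζ_nonneg
    _ ≤ (2 * |ξ| * Real.exp (-2 * ((1 - c) * |ξ|)) +
          2 * |-ξ - η| * Real.exp (-2 * ((1 - c) * |ξ|))) * (|ξ| + |-ξ - η| + 3 * |η|) := by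
        gcongr
        exacts [J.defect_le_of_le_abs le_abs_ξ, J.defect_le_of_le_abs le_abs_ζ]
    _ ≤ (2 * |ξ| * Real.exp (-2 * ((1 - c) * |ξ|)) +
          2 * (2 * |ξ|) * Real.exp (-2 * ((1 - c) * |ξ|))) * (|ξ| + 2 * |ξ| + 3 * |ξ|) := by
        gcongr
    _ = 36 * ξ ^ 2 * Real.exp (2 * (1 - c) * ξ) := by
        rw [abs_ξ]
        ring_nf

/-- High-frequency asymptotic expansion of the resonance function in the region
`|η| ≪ −ξ`, with exponentially small remainder. -/
theorem resonance_asymptotics :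
    ∃ C : ℝ, 0 < C ∧ ∀ ξ η : ℝ, ξ ≤ -1 → |η| ≤ -ξ / 2 →
      |Ω ξ η (-ξ - η) - 4 * J η * ξ - (η + J η) ^ 2| ≤ C * (1 + ξ ^ 2) * Real.exp ξ := by
  refine ⟨36, by norm_num, fun ξ η hξ hη ↦ ?_⟩
  have ξ_nonpos : ξ ≤ 0 := by linarith
  have abs_η_le : |η| ≤ 1 / 2 * |ξ| := by
    rw [abs_of_nonpos ξ_nonpos]
    linarith
  calc |Ω ξ η (-ξ - η) - 4 * J η * ξ - (η + J η) ^ 2|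
      ≤ 36 * ξ ^ 2 * Real.exp (2 * (1 - 1 / 2) * ξ) :=
        resonance_asymptotics_general (by norm_num) ξ_nonpos abs_η_le
    _ = 36 * ξ ^ 2 * Real.exp ξ := by ring_nf
    _ ≤ 36 * (1 + ξ ^ 2) * Real.exp ξ := by
        gcongr
        linarith
end

section
/- For all real ξ, η with ξ ≠ 0, η ≠ 0 and ξ ≠ η, define I(ξ,η) = ξ(1 + coth ξ)(1 + coth(η − ξ)) + η(1 + coth η)(1 + coth(ξ − η)). Then (1/2)·(I(ξ,η) + I(−ξ,−η)) = ξ·coth ξ + η·coth η − (ξ − η)·coth(ξ − η). -/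
/-- The real hyperbolic cotangent. -/
noncomputable def coth (x : ℝ) : ℝ := Real.cosh x / Real.sinh x

noncomputable def Ifun (ξ η : ℝ) : ℝ :=
  ξ * (1 + coth ξ) * (1 + coth (η - ξ)) + η * (1 + coth η) * (1 + coth (ξ - η))

theorem coth_neg (x : ℝ) : coth (-x) = -coth x := by
  rw [coth, coth, Real.cosh_neg, Real.sinh_neg, div_neg]

theorem coth_sub_comm (x y : ℝ) : coth (y - x) = -coth (x - y) := by
  rw [← coth_neg, neg_sub]

theorem Ifun_neg_neg (ξ η : ℝ) :
    Ifun (-ξ) (-η) =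
      -(ξ * (1 - coth ξ) * (1 - coth (η - ξ)) + η * (1 - coth η) * (1 - coth (ξ - η))) := by
  rw [Ifun, neg_sub_neg, neg_sub_neg, coth_neg, coth_neg, coth_sub_comm η ξ]
  ring

/-- Symmetrization identity for the sum-of-squares part of the Taylor
stability kernel. -/
theorem Ifun_symmetrization (ξ η : ℝ) (hξ : ξ ≠ 0) (hη : η ≠ 0) (hne : ξ ≠ η) :
    (1 / 2) * (Ifun ξ η + Ifun (-ξ) (-η)) =
      ξ * coth ξ + η * coth η - (ξ - η) * coth (ξ - η) := by
  calc (1 / 2) * (Ifun ξ η + Ifun (-ξ) (-η))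
      -- Only the terms linear in `coth` survive: `(1 + a) (1 + b) - (1 - a) (1 - b) = 2 (a + b)`.
      _ = ξ * (coth ξ + coth (η - ξ)) + η * (coth η + coth (ξ - η)) := by
        rw [Ifun_neg_neg, Ifun]
        ring
      _ = ξ * coth ξ + η * coth η - (ξ - η) * coth (ξ - η) := by
        rw [coth_sub_comm ξ η]
        ring
end

section
/- Define K(ξ,η) = −(1/2)·((ξ + η) + (ξ − η)·tanh(ξ − η)) and K₁(ξ,η) = (1 − tanh ξ)(1 − tanh η)·K(ξ,η). Then for all real ξ ≠ 0 and η ≠ 0 one has (1/2)·(K₁(ξ,η) + K₁(−ξ,−η)) = tanh ξ·tanh η·( ξ/tanh ξ + η/tanh η − (ξ − η)·tanh(ξ − η) ). -/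
noncomputable def K (ξ η : ℝ) : ℝ :=
  -(1 / 2) * ((ξ + η) + (ξ - η) * Real.tanh (ξ - η))

noncomputable def K₁ (ξ η : ℝ) : ℝ :=
  (1 - Real.tanh ξ) * (1 - Real.tanh η) * K ξ η

/-!
The even part of `K₁` pairs the even factor `1 + tanh ξ tanh η` with the even part
`-(ξ - η) tanh (ξ - η) / 2` of `K`, and the odd factor `-(tanh ξ + tanh η)` with the odd part
`-(ξ + η) / 2`. Writing `1 + tanh ξ tanh η = (1 - tanh ξ tanh η) + 2 tanh ξ tanh η`, the subtraction
formula for `tanh` turns the first summand times `tanh (ξ - η)` into `tanh ξ - tanh η`; the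
polynomial terms then combine to `ξ tanh η + η tanh ξ`.
-/

theorem tanh_ne_zero {x : ℝ} (hx : x ≠ 0) : Real.tanh x ≠ 0 :=
  Real.tanh_zero ▸ Real.tanh_injective.ne hx

theorem tanh_sub_mul_one_sub_tanh_mul_tanh (x y : ℝ) :
    Real.tanh (x - y) * (1 - Real.tanh x * Real.tanh y) = Real.tanh x - Real.tanh y := by
  have hx : Real.cosh x ≠ 0 := (Real.cosh_pos x).ne'
  have hy : Real.cosh y ≠ 0 := (Real.cosh_pos y).ne'
  have hxy : Real.cosh (x - y) ≠ 0 := (Real.cosh_pos (x - y)).ne'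
  have one_sub : 1 - Real.tanh x * Real.tanh y =
      Real.cosh (x - y) / (Real.cosh x * Real.cosh y) := by
    rw [Real.tanh_eq_sinh_div_cosh, Real.tanh_eq_sinh_div_cosh, Real.cosh_sub]
    field_simp
  calc Real.tanh (x - y) * (1 - Real.tanh x * Real.tanh y)
      = Real.sinh (x - y) / (Real.cosh x * Real.cosh y) := by
        rw [one_sub, Real.tanh_eq_sinh_div_cosh, div_mul_div_cancel₀ hxy]
    _ = Real.tanh x - Real.tanh y := by
        rw [Real.sinh_sub, Real.tanh_eq_sinh_div_cosh, Real.tanh_eq_sinh_div_cosh,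
          div_sub_div _ _ hx hy]

theorem K_neg_neg (ξ η : ℝ) :
    K (-ξ) (-η) = (1 / 2) * ((ξ + η) - (ξ - η) * Real.tanh (ξ - η)) := by
  have tanh_diff : Real.tanh (-ξ - -η) = -Real.tanh (ξ - η) := by
    rw [neg_sub_neg, ← neg_sub, Real.tanh_neg]
  rw [K, tanh_diff]
  ring

theorem K₁_neg_neg (ξ η : ℝ) :
    K₁ (-ξ) (-η) = (1 + Real.tanh ξ) * (1 + Real.tanh η) * K (-ξ) (-η) := by
  rw [K₁, Real.tanh_neg, Real.tanh_neg, sub_neg_eq_add, sub_neg_eq_add]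

theorem half_mul_K₁_add_K₁_neg_neg (ξ η : ℝ) :
    (1 / 2) * (K₁ ξ η + K₁ (-ξ) (-η)) =
      ξ * Real.tanh η + η * Real.tanh ξ -
        Real.tanh ξ * Real.tanh η * ((ξ - η) * Real.tanh (ξ - η)) := by
  have even_part : (1 / 2) * (K₁ ξ η + K₁ (-ξ) (-η)) =
      (1 / 2) * ((ξ + η) * (Real.tanh ξ + Real.tanh η) -
        (ξ - η) * (Real.tanh (ξ - η) * (1 + Real.tanh ξ * Real.tanh η))) := by
    rw [K₁_neg_neg, K_neg_neg, K₁, K]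
    ring
  have split : Real.tanh (ξ - η) * (1 + Real.tanh ξ * Real.tanh η) =
      Real.tanh ξ - Real.tanh η + 2 * (Real.tanh ξ * Real.tanh η * Real.tanh (ξ - η)) := by
    rw [← tanh_sub_mul_one_sub_tanh_mul_tanh]
    ring
  rw [even_part, split]
  ring

/-- Symmetrization of the pressure kernel `K₁` in the proof of the Taylor sign
condition for finite-depth gravity water waves. -/
theorem K1_symmetrization (ξ η : ℝ) (hξ : ξ ≠ 0) (hη : η ≠ 0) :
    (1 / 2) * (K₁ ξ η + K₁ (-ξ) (-η)) =
      Real.tanh ξ * Real.tanh η *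
        (ξ / Real.tanh ξ + η / Real.tanh η - (ξ - η) * Real.tanh (ξ - η)) := by
  have hξ' : Real.tanh ξ ≠ 0 := tanh_ne_zero hξ
  have hη' : Real.tanh η ≠ 0 := tanh_ne_zero hη
  rw [half_mul_K₁_add_K₁_neg_neg]
  field_simp
end

section
/- Let f : ℝ → ℂ be a Schwartz function and let f̂(ξ) = (2π)^{−1/2}·∫_ℝ f(α)e^{−iαξ} dα be its Fourier transform. Define u(α,β) = (2π)^{−1/2}·∫_ℝ (cosh((β+1)ξ)/cosh ξ)·f̂(ξ)·e^{iαξ} dξ for (α,β) ∈ ℝ × [−1,0]. Then this integral converges absolutely, u is smooth on ℝ × [−1,0], u satisfies the Laplace equation ∂²u/∂α² + ∂²u/∂β² = 0 on ℝ × (−1,0), u(α,0) = f(α) for all α, and ∂u/∂β(α,−1) = 0 for all α. -/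
open MeasureTheory

/-- The Fourier transform `f̂(ξ) = (2π)^{−1/2} ∫ f(α) e^{−iαξ} dα`. -/
noncomputable def FT (f : ℝ → ℂ) (ξ : ℝ) : ℂ :=
  ((2 * Real.pi) ^ (-(1 : ℝ) / 2) : ℝ) •
    ∫ α : ℝ, f α * Complex.exp (-(Complex.I * α * ξ))

/-!
By Euler's formula for `cosh`, the solution is `u(α, β) = F(iα + (β + 1)) + F(iα - (β + 1))`, where
`F` is a multiple of the bilateral Laplace transform of `f̂ / cosh`. Since `1 / cosh` compensates
exactly the growth of `e^{zξ}` for `|Re z| ≤ 1`, one may differentiate under the integral up to the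
boundary of that strip, so `F` is smooth on the closed strip and holomorphic inside. Hence `u` is
smooth up to the boundary, is harmonic as the sum of a holomorphic and an antiholomorphic function
of `(β + 1) + iα`, and is even in `β + 1`, which gives the Neumann condition. At `β = 0` the
multiplier is `1` and Fourier inversion returns `f`.
-/

open Set Filter Topology FourierTransform
open scoped ContDiff

variable {E : Type*} [NormedAddCommGroup E]

theorem hasDerivWithinAt_integral_of_dominated_of_convex {X 𝕜 : Type*} [MeasurableSpace X]
    {μ : Measure X} [RCLike 𝕜] [NormedSpace ℝ E] [NormedSpace 𝕜 E] {s : Set 𝕜} (hs : Convex ℝ s)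
    {F F' : 𝕜 → X → E} {bound : X → ℝ} {z : 𝕜} (hz : z ∈ s)
    (hF_int : ∀ w ∈ s, Integrable (F w) μ)
    (h_bound : ∀ᵐ x ∂μ, ∀ w ∈ s, ‖F' w x‖ ≤ bound x) (bound_integrable : Integrable bound μ)
    (h_deriv : ∀ᵐ x ∂μ, ∀ w ∈ s, HasDerivWithinAt (F · x) (F' w x) s w) :
    HasDerivWithinAt (fun w => ∫ x, F w x ∂μ) (∫ x, F' z x ∂μ) s z := by
  rw [hasDerivWithinAt_iff_tendsto_slope]
  have slope_integral : ∀ᶠ w in 𝓝[s \ {z}] z,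
      ∫ x, slope (F · x) z w ∂μ = slope (fun w => ∫ x, F w x ∂μ) z w := by
    filter_upwards [self_mem_nhdsWithin] with w hw
    simp only [slope_def_module]
    rw [integral_smul, integral_sub (hF_int w hw.1) (hF_int z hz)]
  refine (tendsto_integral_filter_of_dominated_convergence bound ?_ ?_ bound_integrable
    ?_).congr' slope_integral
  · filter_upwards [self_mem_nhdsWithin] with w hw
    simp only [slope_def_module]
    exact (((hF_int w hw.1).sub (hF_int z hz)).smul (w - z)⁻¹).aestronglyMeasurable
  · filter_upwards [self_mem_nhdsWithin] with w hw
    filter_upwards [h_bound, h_deriv] with x hx_bound hx_deriv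
    have lipschitz : ‖F w x - F z x‖ ≤ bound x * ‖w - z‖ :=
      hs.norm_image_sub_le_of_norm_hasDerivWithin_le hx_deriv hx_bound hz hw.1
    have norm_pos : 0 < ‖w - z‖ := norm_pos_iff.2 (sub_ne_zero.2 hw.2)
    rw [slope_def_module, norm_smul, norm_inv, inv_mul_le_iff₀ norm_pos, mul_comm]
    exact lipschitz
  · filter_upwards [h_deriv] with x hx
    exact hasDerivWithinAt_iff_tendsto_slope.1 (hx z hz)

theorem convex_re_preimage_Icc (a b : ℝ) : Convex ℝ (Complex.re ⁻¹' Icc a b) :=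
  (convex_Icc a b).linear_preimage Complex.reLm

theorem exp_mul_le_exp_add_exp {a b x : ℝ} (hx : x ∈ Icc a b) (ξ : ℝ) :
    Real.exp (x * ξ) ≤ Real.exp (a * ξ) + Real.exp (b * ξ) := by
  rcases le_total 0 ξ with hξ | hξ
  · have := Real.exp_le_exp.2 (mul_le_mul_of_nonneg_right hx.2 hξ)
    linarith [Real.exp_pos (a * ξ)]
  · have := Real.exp_le_exp.2 (mul_le_mul_of_nonpos_right hx.1 hξ)
    linarith [Real.exp_pos (b * ξ)]

section BilateralLaplace

variable [NormedSpace ℂ E] {μ : Measure ℝ} {a b : ℝ} {φ : ℝ → E} {z : ℂ}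

/-- The bilateral Laplace transform of `φ` with respect to `μ`, with the sign convention `e^{zξ}`
of moment generating functions. -/
noncomputable def bilateralLaplace (μ : Measure ℝ) (φ : ℝ → E) (z : ℂ) : E :=
  ∫ ξ, Complex.exp (z * ξ) • φ ξ ∂μ

/-- All moments of `φ` against the exponential weights of both edges of the strip `a ≤ Re z ≤ b` are
integrable. This is the decay that makes the bilateral Laplace transform smooth on the closed
strip. -/
def HasStripMoments (μ : Measure ℝ) (a b : ℝ) (φ : ℝ → E) : Prop :=
  ∀ k : ℕ, Integrable (fun ξ : ℝ => (ξ ^ k * (Real.exp (a * ξ) + Real.exp (b * ξ))) • φ ξ) μ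

theorem HasStripMoments.smul_id (hφ : HasStripMoments μ a b φ) :
    HasStripMoments μ a b (fun ξ => ξ • φ ξ) := by
  intro k
  refine (hφ (k + 1)).congr (.of_forall fun ξ => ?_)
  simp only [smul_smul]
  ring_nf

theorem HasStripMoments.aestronglyMeasurable (hφ : HasStripMoments μ a b φ) :
    AEStronglyMeasurable φ μ := by
  have weight_inv : Continuous fun ξ : ℝ => (Real.exp (a * ξ) + Real.exp (b * ξ))⁻¹ :=
    Continuous.inv₀ (by fun_prop) fun ξ => by positivity
  refine (weight_inv.aestronglyMeasurable.smul (hφ 0).aestronglyMeasurable).congr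
    (.of_forall fun ξ => ?_)
  have : Real.exp (a * ξ) + Real.exp (b * ξ) ≠ 0 := by positivity
  simp [smul_smul, this]

theorem norm_cexp_mul_smul_le (hz : z ∈ Complex.re ⁻¹' Icc a b) (ξ : ℝ) (v : E) :
    ‖Complex.exp (z * ξ) • v‖ ≤ ‖(Real.exp (a * ξ) + Real.exp (b * ξ)) • v‖ := by
  have weight_nonneg : 0 ≤ Real.exp (a * ξ) + Real.exp (b * ξ) := by positivity
  rw [norm_smul, norm_smul, Real.norm_of_nonneg weight_nonneg, Complex.norm_exp,
    Complex.re_mul_ofReal]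
  gcongr
  exact exp_mul_le_exp_add_exp hz ξ

theorem HasStripMoments.integrable_cexp_smul (hφ : HasStripMoments μ a b φ)
    (hz : z ∈ Complex.re ⁻¹' Icc a b) : Integrable (fun ξ : ℝ => Complex.exp (z * ξ) • φ ξ) μ := by
  have kernel_continuous : Continuous fun ξ : ℝ => Complex.exp (z * ξ) := by fun_prop
  refine (hφ 0).mono (kernel_continuous.aestronglyMeasurable.smul hφ.aestronglyMeasurable)
    (.of_forall fun ξ => ?_)
  simpa using norm_cexp_mul_smul_le hz ξ (φ ξ)

theorem HasStripMoments.hasDerivWithinAt_bilateralLaplace (hφ : HasStripMoments μ a b φ)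
    (hz : z ∈ Complex.re ⁻¹' Icc a b) :
    HasDerivWithinAt (bilateralLaplace μ φ) (bilateralLaplace μ (fun ξ => ξ • φ ξ) z)
      (Complex.re ⁻¹' Icc a b) z := by
  refine hasDerivWithinAt_integral_of_dominated_of_convex (convex_re_preimage_Icc a b) hz
    (F' := fun w (ξ : ℝ) => Complex.exp (w * ξ) • ξ • φ ξ)
    (fun w hw => hφ.integrable_cexp_smul hw)
    (.of_forall fun ξ w hw => norm_cexp_mul_smul_le hw ξ (ξ • φ ξ))
    (by simpa using (hφ.smul_id 0).norm) (.of_forall fun ξ w _ => ?_)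
  have cexp_deriv : HasDerivAt (fun w : ℂ => Complex.exp (w * ξ)) (Complex.exp (w * ξ) * ξ) w := by
    simpa using ((hasDerivAt_id w).mul_const (ξ : ℂ)).cexp
  simpa [mul_smul] using (cexp_deriv.smul_const (φ ξ)).hasDerivWithinAt

theorem HasStripMoments.contDiffOn_bilateralLaplace (hab : a < b) (hφ : HasStripMoments μ a b φ) :
    ContDiffOn ℂ ∞ (bilateralLaplace μ φ) (Complex.re ⁻¹' Icc a b) := by
  have strip_interior : (interior (Complex.re ⁻¹' Icc a b)).Nonempty := by
    rw [Complex.interior_preimage_re, interior_Icc]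
    exact (nonempty_Ioo.2 hab).preimage Complex.re_surjective
  have strip_uniqueDiff : UniqueDiffOn ℂ (Complex.re ⁻¹' Icc a b) :=
    (uniqueDiffOn_convex (convex_re_preimage_Icc a b) strip_interior).mono_field
  refine contDiffOn_infty.2 fun n => ?_
  induction n generalizing φ with
  | zero =>
    exact contDiffOn_zero.2 fun z hz => (hφ.hasDerivWithinAt_bilateralLaplace hz).continuousWithinAt
  | succ n ih =>
    rw [Nat.cast_succ, contDiffOn_succ_iff_derivWithin strip_uniqueDiff]
    refine ⟨fun z hz => (hφ.hasDerivWithinAt_bilateralLaplace hz).differentiableWithinAt,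
      by simp, (ih hφ.smul_id).congr fun z hz => ?_⟩
    exact (hφ.hasDerivWithinAt_bilateralLaplace hz).derivWithin (strip_uniqueDiff z hz)

end BilateralLaplace

section ReflectionSum

open Complex

variable [NormedSpace ℂ E] {F : ℂ → E}

/-- The function `z ↦ F z + F (-conj z)` in the coordinates `z = y + ix`. For holomorphic `F` it is
the sum of a holomorphic and an antiholomorphic function. -/
def reflectionSum (F : ℂ → E) (x y : ℝ) : E :=
  F (I * x + y) + F (I * x - y)

theorem iteratedDeriv_comp_add_ofReal_mul [CompleteSpace E] {p w : ℂ} {t : ℝ}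
    (hF : AnalyticAt ℂ F (p + t * w)) (n : ℕ) :
    iteratedDeriv n (fun s : ℝ => F (p + s * w)) t = w ^ n • iteratedDeriv n F (p + t * w) := by
  induction n generalizing t with
  | zero => simp
  | succ n ih =>
    have line_deriv : HasDerivAt (fun s : ℝ => p + s * w) w t := by
      simpa using ((hasDerivAt_id (t : ℂ)).comp_ofReal.mul_const w).const_add p
    have ih_near : iteratedDeriv n (fun s : ℝ => F (p + s * w)) =ᶠ[𝓝 t]
        fun s => w ^ n • iteratedDeriv n F (p + s * w) :=
      (line_deriv.continuousAt.eventually hF.eventually_analyticAt).mono fun s hs => ih hs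
    have outer_deriv : HasDerivAt (iteratedDeriv n F) (iteratedDeriv (n + 1) F (p + t * w))
        (p + t * w) := by
      rw [iteratedDeriv_succ, iteratedDeriv_eq_iterate]
      exact (hF.iterated_deriv n).differentiableAt.hasDerivAt
    rw [iteratedDeriv_succ, ih_near.deriv_eq, pow_succ, mul_smul]
    exact ((outer_deriv.scomp t line_deriv).const_smul (w ^ n)).deriv

theorem contDiffAt_comp_add_ofReal_mul [CompleteSpace E] {p w : ℂ} {t : ℝ}
    (hF : AnalyticAt ℂ F (p + t * w)) {n : WithTop ℕ∞} :
    ContDiffAt ℝ n (fun s : ℝ => F (p + s * w)) t :=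
  (hF.contDiffAt.restrict_scalars ℝ).comp t
    (contDiff_const.add (ofRealCLM.contDiff.mul contDiff_const)).contDiffAt

theorem iteratedDeriv_add_comp_add_ofReal_mul [CompleteSpace E] {p q v w : ℂ} {t : ℝ}
    (hp : AnalyticAt ℂ F (p + t * v)) (hq : AnalyticAt ℂ F (q + t * w)) (n : ℕ) :
    iteratedDeriv n (fun s : ℝ => F (p + s * v) + F (q + s * w)) t =
      v ^ n • iteratedDeriv n F (p + t * v) + w ^ n • iteratedDeriv n F (q + t * w) := by
  rw [iteratedDeriv_fun_add (contDiffAt_comp_add_ofReal_mul hp) (contDiffAt_comp_add_ofReal_mul hq),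
    iteratedDeriv_comp_add_ofReal_mul hp, iteratedDeriv_comp_add_ofReal_mul hq]

theorem contDiffOn_reflectionSum {r : ℝ} {n : WithTop ℕ∞}
    (hF : ContDiffOn ℝ n F (re ⁻¹' Icc (-r) r)) :
    ContDiffOn ℝ n (fun p : ℝ × ℝ => reflectionSum F p.1 p.2) (univ ×ˢ Icc (-r) r) := by
  have ofReal_fst : ContDiff ℝ n fun p : ℝ × ℝ => (p.1 : ℂ) := ofRealCLM.contDiff.comp contDiff_fst
  have ofReal_snd : ContDiff ℝ n fun p : ℝ × ℝ => (p.2 : ℂ) := ofRealCLM.contDiff.comp contDiff_snd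
  refine (hF.comp ((contDiff_const.mul ofReal_fst).add ofReal_snd).contDiffOn ?_).add
    (hF.comp ((contDiff_const.mul ofReal_fst).sub ofReal_snd).contDiffOn ?_)
  · rintro ⟨x, y⟩ ⟨-, hy⟩
    simpa using hy
  · rintro ⟨x, y⟩ ⟨-, hy⟩
    simpa [and_comm, neg_le] using hy

theorem iteratedDeriv_two_reflectionSum_add [CompleteSpace E] {x y : ℝ}
    (h_add : AnalyticAt ℂ F (I * x + y)) (h_sub : AnalyticAt ℂ F (I * x - y)) :
    iteratedDeriv 2 (fun s => reflectionSum F s y) x +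
      iteratedDeriv 2 (fun t => reflectionSum F x t) y = 0 := by
  have horizontal : (fun s => reflectionSum F s y) =
      fun s : ℝ => F (y + s * I) + F (-y + s * I) := by
    funext s
    simp only [reflectionSum]
    ring_nf
  have vertical : (fun t => reflectionSum F x t) =
      fun t : ℝ => F (I * x + t * 1) + F (I * x + t * (-1)) := by
    funext t
    simp only [reflectionSum]
    ring_nf
  have add_eq : I * x + y = y + x * I := by ring
  have sub_eq : I * x - y = -y + x * I := by ring
  rw [horizontal, vertical,
    iteratedDeriv_add_comp_add_ofReal_mul (add_eq ▸ h_add) (sub_eq ▸ h_sub),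
    iteratedDeriv_add_comp_add_ofReal_mul (by simpa using h_add)
      (by simpa [sub_eq_add_neg] using h_sub),
    ← add_eq, ← sub_eq, mul_one, mul_neg_one, ← sub_eq_add_neg, I_sq]
  module

theorem hasDerivAt_reflectionSum_zero {x : ℝ} (hF : DifferentiableAt ℂ F (I * x)) :
    HasDerivAt (fun y => reflectionSum F x y) 0 0 := by
  have ofReal_deriv : HasDerivAt (fun y : ℝ => (y : ℂ)) 1 0 :=
    (hasDerivAt_id ((0 : ℝ) : ℂ)).comp_ofReal
  have upper := HasDerivAt.scomp (g₁ := F) 0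
    (by simpa only [ofReal_zero, add_zero] using hF.hasDerivAt) (ofReal_deriv.const_add (I * x))
  have lower := HasDerivAt.scomp (g₁ := F) 0
    (by simpa only [ofReal_zero, sub_zero] using hF.hasDerivAt) (ofReal_deriv.const_sub (I * x))
  exact (upper.add lower).congr_deriv (by simp)

end ReflectionSum

section FourierInversion

theorem FT_eq_smul_fourier (f : ℝ → ℂ) (ξ : ℝ) :
    FT f ξ = ((2 * Real.pi) ^ (-(1 : ℝ) / 2) : ℝ) • 𝓕 f ((2 * Real.pi)⁻¹ * ξ) := by
  rw [FT, Real.fourier_eq']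
  congr 2
  funext v
  rw [smul_eq_mul, mul_comm]
  congr 2
  push_cast [RCLike.inner_apply, conj_trivial]
  field_simp

theorem integrable_pow_smul_FT_iff (f : ℝ → ℂ) (k : ℕ) :
    Integrable (fun ξ : ℝ => ξ ^ k • FT f ξ) ↔ Integrable (fun η : ℝ => η ^ k • 𝓕 f η) := by
  have rescale (ξ : ℝ) : ξ ^ k • FT f ξ = ((2 * Real.pi) ^ (-(1 : ℝ) / 2) * (2 * Real.pi) ^ k) •
      (((2 * Real.pi)⁻¹ * ξ) ^ k • 𝓕 f ((2 * Real.pi)⁻¹ * ξ)) := by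
    rw [FT_eq_smul_fourier, smul_smul, smul_smul, mul_assoc, ← mul_pow,
      mul_inv_cancel_left₀ (by positivity), mul_comm (ξ ^ k)]
  have scale_ne : (2 * Real.pi) ^ (-(1 : ℝ) / 2) * (2 * Real.pi) ^ k ≠ 0 := by positivity
  simp only [rescale]
  exact (integrable_fun_smul_iff scale_ne _).trans
    (integrable_comp_mul_left_iff (fun η : ℝ => η ^ k • 𝓕 f η) (by positivity))

theorem integrable_pow_smul_FT (f : SchwartzMap ℝ ℂ) (k : ℕ) :
    Integrable (fun ξ : ℝ => ξ ^ k • FT f ξ) := by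
  rw [integrable_pow_smul_FT_iff, ← SchwartzMap.fourier_coe]
  refine ((𝓕 f).integrable_pow_mul volume k).mono' ?_ (.of_forall fun η => by simp)
  exact ((continuous_id.pow k).smul (𝓕 f).continuous).aestronglyMeasurable

theorem inverse_FT_eq_fourierInv (f : ℝ → ℂ) (α : ℝ) :
    ((2 * Real.pi) ^ (-(1 : ℝ) / 2) : ℝ) • ∫ ξ : ℝ, FT f ξ * Complex.exp (Complex.I * α * ξ) =
      𝓕⁻ (𝓕 f) α := by
  set c : ℝ := (2 * Real.pi) ^ (-(1 : ℝ) / 2) with hc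
  let G : ℝ → ℂ := fun η => Complex.exp ((2 * Real.pi * (η * α) : ℝ) * Complex.I) • 𝓕 f η
  have rescale (ξ : ℝ) :
      FT f ξ * Complex.exp (Complex.I * α * ξ) = c • G ((2 * Real.pi)⁻¹ * ξ) := by
    rw [FT_eq_smul_fourier, smul_mul_assoc, mul_comm (𝓕 f _), ← smul_eq_mul (Complex.exp _)]
    congr 3
    push_cast
    field_simp
  have normalization : c * (c * |(2 * Real.pi)⁻¹⁻¹|) = 1 := by
    rw [← mul_assoc, hc, ← Real.rpow_add (by positivity), inv_inv, abs_of_pos (by positivity),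
      show -(1 : ℝ) / 2 + -1 / 2 = -1 by norm_num, Real.rpow_neg_one,
      inv_mul_cancel₀ (by positivity)]
  calc c • ∫ ξ : ℝ, FT f ξ * Complex.exp (Complex.I * α * ξ)
      = c • ∫ ξ : ℝ, c • G ((2 * Real.pi)⁻¹ * ξ) := by simp only [rescale]
    _ = (c * (c * |(2 * Real.pi)⁻¹⁻¹|)) • ∫ η, G η := by
      rw [integral_smul, Measure.integral_comp_mul_left, smul_smul, smul_smul, mul_assoc]
    _ = 𝓕⁻ (𝓕 f) α := by
      rw [normalization, one_smul, Real.fourierInv_eq']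
      simp [G, mul_comm]

theorem inverse_FT_eq_of_continuous {f : ℝ → ℂ} (hf_cont : Continuous f) (hf_int : Integrable f)
    (hFT_int : Integrable (FT f)) (α : ℝ) :
    ((2 * Real.pi) ^ (-(1 : ℝ) / 2) : ℝ) • ∫ ξ : ℝ, FT f ξ * Complex.exp (Complex.I * α * ξ) =
      f α := by
  have fourier_int : Integrable (𝓕 f) := by
    simpa using (integrable_pow_smul_FT_iff f 0).1 (by simpa using hFT_int)
  rw [inverse_FT_eq_fourierInv, hf_cont.fourierInv_fourier_eq hf_int fourier_int]

end FourierInversion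

section MixedStripSolution

open Complex

theorem hasStripMoments_inv_cosh_smul [NormedSpace ℂ E] {g : ℝ → E}
    (hg : ∀ k : ℕ, Integrable (fun ξ : ℝ => ξ ^ k • g ξ)) :
    HasStripMoments volume (-1) 1 (fun ξ => (Real.cosh ξ)⁻¹ • g ξ) := by
  intro k
  refine (Integrable.smul (2 : ℝ) (hg k)).congr (.of_forall fun ξ => ?_)
  have cosh_ne : Real.cosh ξ ≠ 0 := (Real.cosh_pos ξ).ne'
  have weight : Real.exp (-1 * ξ) + Real.exp (1 * ξ) = 2 * Real.cosh ξ := by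
    rw [Real.cosh_eq]
    ring_nf
  simp only [Pi.smul_apply, weight, smul_smul]
  congr 1
  field_simp

/-- The solution formula of the mixed boundary-value problem, with an arbitrary density `g` in place
of the Fourier transform of the Dirichlet data. -/
noncomputable def mixedStripSolution (g : ℝ → ℂ) (α β : ℝ) : ℂ :=
  ((2 * Real.pi) ^ (-(1 : ℝ) / 2) : ℝ) •
    ∫ ξ : ℝ, ((Real.cosh ((β + 1) * ξ) / Real.cosh ξ : ℝ) : ℂ) * g ξ * exp (I * α * ξ)

/-- The holomorphic function on the strip `|Re z| < 1` whose reflection sum is the solution with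
density `g`. -/
noncomputable def stripPotential (g : ℝ → ℂ) (z : ℂ) : ℂ :=
  ((2 * Real.pi) ^ (-(1 : ℝ) / 2) / 2 : ℝ) •
    bilateralLaplace volume (fun ξ => (Real.cosh ξ)⁻¹ • g ξ) z

theorem cosh_div_cosh_mul_cexp_eq (α y ξ : ℝ) (c : ℂ) :
    ((Real.cosh (y * ξ) / Real.cosh ξ : ℝ) : ℂ) * c * exp (I * α * ξ) =
      (1 / 2 : ℝ) • (exp ((I * α + y) * ξ) • (Real.cosh ξ)⁻¹ • c +
        exp ((I * α - y) * ξ) • (Real.cosh ξ)⁻¹ • c) := by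
  simp only [smul_eq_mul, real_smul, add_mul, sub_mul, exp_add, exp_sub]
  push_cast
  rw [Complex.cosh.eq_def (y * ξ), exp_neg]
  ring

variable {g : ℝ → ℂ} {α β : ℝ}

theorem I_mul_add_mem_and_sub_mem_strip (α : ℝ) (hβ : β ∈ Icc (-2) 0) :
    I * α + (β + 1 : ℝ) ∈ re ⁻¹' Icc (-1) 1 ∧ I * α - (β + 1 : ℝ) ∈ re ⁻¹' Icc (-1) 1 := by
  obtain ⟨lower, upper⟩ := hβ
  constructor <;> constructor <;> simp <;> linarith

theorem integrable_cosh_div_cosh_mul (hg : ∀ k : ℕ, Integrable (fun ξ : ℝ => ξ ^ k • g ξ))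
    (hβ : β ∈ Icc (-2) 0) : Integrable (fun ξ : ℝ =>
      ((Real.cosh ((β + 1) * ξ) / Real.cosh ξ : ℝ) : ℂ) * g ξ * exp (I * α * ξ)) := by
  obtain ⟨add_mem, sub_mem⟩ := I_mul_add_mem_and_sub_mem_strip α hβ
  have moments := hasStripMoments_inv_cosh_smul hg
  simp only [cosh_div_cosh_mul_cexp_eq]
  exact Integrable.smul (1 / 2 : ℝ)
    ((moments.integrable_cexp_smul add_mem).add (moments.integrable_cexp_smul sub_mem))

theorem mixedStripSolution_eq_reflectionSum
    (hg : ∀ k : ℕ, Integrable (fun ξ : ℝ => ξ ^ k • g ξ)) (hβ : β ∈ Icc (-2) 0) :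
    mixedStripSolution g α β = reflectionSum (stripPotential g) α (β + 1) := by
  obtain ⟨add_mem, sub_mem⟩ := I_mul_add_mem_and_sub_mem_strip α hβ
  have moments := hasStripMoments_inv_cosh_smul hg
  simp only [mixedStripSolution, cosh_div_cosh_mul_cexp_eq]
  rw [integral_smul, integral_add (moments.integrable_cexp_smul add_mem)
    (moments.integrable_cexp_smul sub_mem), smul_smul, mul_one_div, smul_add]
  rfl

theorem contDiffOn_stripPotential (hg : ∀ k : ℕ, Integrable (fun ξ : ℝ => ξ ^ k • g ξ)) :
    ContDiffOn ℂ ∞ (stripPotential g) (re ⁻¹' Icc (-1) 1) :=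
  ((hasStripMoments_inv_cosh_smul hg).contDiffOn_bilateralLaplace (by norm_num)).const_smul _

theorem analyticAt_stripPotential (hg : ∀ k : ℕ, Integrable (fun ξ : ℝ => ξ ^ k • g ξ)) {z : ℂ}
    (hz : z.re ∈ Ioo (-1) 1) : AnalyticAt ℂ (stripPotential g) z := by
  refine ((contDiffOn_stripPotential hg).differentiableOn (by simp)).analyticAt ?_
  rw [← mem_interior_iff_mem_nhds, interior_preimage_re, interior_Icc]
  exact hz

theorem contDiffOn_mixedStripSolution (hg : ∀ k : ℕ, Integrable (fun ξ : ℝ => ξ ^ k • g ξ)) :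
    ContDiffOn ℝ ∞ (fun p : ℝ × ℝ => mixedStripSolution g p.1 p.2) (univ ×ˢ Icc (-2) 0) := by
  have translate : ContDiff ℝ ∞ fun p : ℝ × ℝ => (p.1, p.2 + 1) := by fun_prop
  have reflectionSum_smooth := contDiffOn_reflectionSum
    ((contDiffOn_stripPotential hg).restrict_scalars ℝ)
  refine (reflectionSum_smooth.comp translate.contDiffOn ?_).congr
    fun p hp => mixedStripSolution_eq_reflectionSum hg hp.2
  rintro ⟨α, β⟩ ⟨-, lower, upper⟩
  exact ⟨mem_univ _, by linarith, by linarith⟩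

theorem mixedStripSolution_eventuallyEq_reflectionSum
    (hg : ∀ k : ℕ, Integrable (fun ξ : ℝ => ξ ^ k • g ξ)) (hβ : β ∈ Ioo (-2) 0) :
    (fun y => mixedStripSolution g α y) =ᶠ[𝓝 β]
      fun y => reflectionSum (stripPotential g) α (y + 1) := by
  filter_upwards [Ioo_mem_nhds hβ.1 hβ.2] with y hy
  exact mixedStripSolution_eq_reflectionSum hg (Ioo_subset_Icc_self hy)

theorem iteratedDeriv_two_mixedStripSolution_add
    (hg : ∀ k : ℕ, Integrable (fun ξ : ℝ => ξ ^ k • g ξ)) (hβ : β ∈ Ioo (-2) 0) :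
    iteratedDeriv 2 (fun x => mixedStripSolution g x β) α +
      iteratedDeriv 2 (fun y => mixedStripSolution g α y) β = 0 := by
  simp only [mixedStripSolution_eq_reflectionSum hg (Ioo_subset_Icc_self hβ)]
  rw [(mixedStripSolution_eventuallyEq_reflectionSum hg hβ).iteratedDeriv_eq,
    iteratedDeriv_comp_add_const]
  obtain ⟨lower, upper⟩ := hβ
  exact iteratedDeriv_two_reflectionSum_add
    (analyticAt_stripPotential hg (by constructor <;> simp <;> linarith))
    (analyticAt_stripPotential hg (by constructor <;> simp <;> linarith))

theorem hasDerivAt_mixedStripSolution_bottom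
    (hg : ∀ k : ℕ, Integrable (fun ξ : ℝ => ξ ^ k • g ξ)) (α : ℝ) :
    HasDerivAt (fun y => mixedStripSolution g α y) 0 (-1) := by
  refine HasDerivAt.congr_of_eventuallyEq ?_
    (mixedStripSolution_eventuallyEq_reflectionSum hg (by norm_num))
  refine HasDerivAt.comp_add_const (-1) 1 ?_
  rw [neg_add_cancel]
  exact hasDerivAt_reflectionSum_zero (analyticAt_stripPotential hg (by simp)).differentiableAt

theorem mixedStripSolution_top (g : ℝ → ℂ) (α : ℝ) :
    mixedStripSolution g α 0 =
      ((2 * Real.pi) ^ (-(1 : ℝ) / 2) : ℝ) • ∫ ξ : ℝ, g ξ * exp (I * α * ξ) := by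
  simp [mixedStripSolution, (Real.cosh_pos _).ne']

end MixedStripSolution

theorem strip_laplace_solution_general {f : ℝ → ℂ} (hf_cont : Continuous f) (hf_int : Integrable f)
    (hFT : ∀ k : ℕ, Integrable (fun ξ : ℝ => ξ ^ k • FT f ξ)) {u : ℝ → ℝ → ℂ}
    (hu : ∀ α β : ℝ, u α β =
      ((2 * Real.pi) ^ (-(1 : ℝ) / 2) : ℝ) •
        ∫ ξ : ℝ, ((Real.cosh ((β + 1) * ξ) / Real.cosh ξ : ℝ) : ℂ) * FT f ξ *
          Complex.exp (Complex.I * α * ξ)) :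
    (∀ α β : ℝ, β ∈ Icc (-1 : ℝ) 0 →
        Integrable (fun ξ : ℝ =>
          ((Real.cosh ((β + 1) * ξ) / Real.cosh ξ : ℝ) : ℂ) * FT f ξ *
            Complex.exp (Complex.I * α * ξ))) ∧
      ContDiffOn ℝ (⊤ : ℕ∞) (fun p : ℝ × ℝ => u p.1 p.2)
        (univ ×ˢ Icc (-1 : ℝ) 0) ∧
      (∀ α β : ℝ, β ∈ Ioo (-1 : ℝ) 0 →
        deriv (fun x => deriv (fun x' => u x' β) x) α +
          deriv (fun y => deriv (fun y' => u α y') y) β = 0) ∧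
      (∀ α : ℝ, u α 0 = f α) ∧
      (∀ α : ℝ, deriv (fun y => u α y) (-1) = 0) := by
  obtain rfl : u = mixedStripSolution (FT f) := funext₂ hu
  have Icc_subset : Icc (-1 : ℝ) 0 ⊆ Icc (-2) 0 := Icc_subset_Icc_left (by norm_num)
  have Ioo_subset : Ioo (-1 : ℝ) 0 ⊆ Ioo (-2) 0 := Ioo_subset_Ioo_left (by norm_num)
  refine ⟨fun α β hβ => integrable_cosh_div_cosh_mul hFT (Icc_subset hβ),
    (contDiffOn_mixedStripSolution hFT).mono (prod_mono_right Icc_subset), fun α β hβ => ?_,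
    fun α => ?_, fun α => (hasDerivAt_mixedStripSolution_bottom hFT α).deriv⟩
  · simpa only [iteratedDeriv_succ, iteratedDeriv_zero] using
      iteratedDeriv_two_mixedStripSolution_add hFT (Ioo_subset hβ)
  · rw [mixedStripSolution_top]
    exact inverse_FT_eq_of_continuous hf_cont hf_int (by simpa using hFT 0) α

/-- The solution formula for the mixed boundary-value problem for the Laplacian
on the strip `ℝ × (−1,0)`: Dirichlet data `f` on top, homogeneous Neumann on
the bottom. -/
theorem strip_laplace_solution (f : SchwartzMap ℝ ℂ) (u : ℝ → ℝ → ℂ)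
    (hu : ∀ α β : ℝ, u α β =
      ((2 * Real.pi) ^ (-(1 : ℝ) / 2) : ℝ) •
        ∫ ξ : ℝ, ((Real.cosh ((β + 1) * ξ) / Real.cosh ξ : ℝ) : ℂ) * FT (⇑f) ξ *
          Complex.exp (Complex.I * α * ξ)) :
    (∀ α β : ℝ, β ∈ Set.Icc (-1 : ℝ) 0 →
        Integrable (fun ξ : ℝ =>
          ((Real.cosh ((β + 1) * ξ) / Real.cosh ξ : ℝ) : ℂ) * FT (⇑f) ξ *
            Complex.exp (Complex.I * α * ξ))) ∧
      ContDiffOn ℝ (⊤ : ℕ∞) (fun p : ℝ × ℝ => u p.1 p.2)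
        (Set.univ ×ˢ Set.Icc (-1 : ℝ) 0) ∧
      (∀ α β : ℝ, β ∈ Set.Ioo (-1 : ℝ) 0 →
        deriv (fun x => deriv (fun x' => u x' β) x) α +
          deriv (fun y => deriv (fun y' => u α y') y) β = 0) ∧
      (∀ α : ℝ, u α 0 = f α) ∧
      (∀ α : ℝ, deriv (fun y => u α y) (-1) = 0) := by
  exact strip_laplace_solution_general f.continuous f.integrable (integrable_pow_smul_FT f) hu
end
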